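/- Let G ∈ ℂ^{n×n} be Hermitian positive semidefinite, d, g ∈ ℂ^n, and define q(u) = (uᴴ G u).re − 2·Re(gᴴ u). Then the function h : [0, ∞) → ℝ given by h(ε) = q((I + ε·G)⁻¹(d + ε·g)) is antitone (non-increasing): for all 0 ≤ ε₁ ≤ ε₂ one has h(ε₂) ≤ h(ε₁). -/

import Mathlib

open Matrix ComplexOrder

/-- The value at `u` of the real quadratic `uᴴ G u − 2 Re(gᴴ u)`. -/
noncomputable def quadValue {n : ℕ} (G : Matrix (Fin n) (Fin n) ℂ) (g u : Fin n → ℂ) : ℝ :=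
  (star u ⬝ᵥ (G *ᵥ u)).re - 2 * (star g ⬝ᵥ u).re

lemma re_star_dotProduct_comm {n : ℕ} (x y : Fin n → ℂ) :
    (star x ⬝ᵥ y).re = (star y ⬝ᵥ x).re := by
  rw [← Complex.conj_re, ← Complex.star_def, Matrix.star_dotProduct, star_star]

lemma re_star_dotProduct_self_nonneg {n : ℕ} (x : Fin n → ℂ) : 0 ≤ (star x ⬝ᵥ x).re :=
  (Complex.le_def.mp (dotProduct_star_self_nonneg x)).1

lemma Matrix.IsHermitian.re_star_dotProduct_mulVec_comm {n : ℕ} {G : Matrix (Fin n) (Fin n) ℂ}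
    (hG : G.IsHermitian) (x y : Fin n → ℂ) :
    (star x ⬝ᵥ (G *ᵥ y)).re = (star y ⬝ᵥ (G *ᵥ x)).re := by
  rw [re_star_dotProduct_comm, star_mulVec, hG.eq, dotProduct_mulVec]

/-- A solution `u` of `(I + aG) u = d + a g` minimizes the Lagrangian `‖w - d‖² + a q(w)`. -/
lemma Matrix.PosSemidef.lagrangian_le {n : ℕ} {G : Matrix (Fin n) (Fin n) ℂ}
    (hG : G.PosSemidef) {d g u : Fin n → ℂ} {a : ℝ} (ha : 0 ≤ a)
    (hu : (1 + (a : ℂ) • G) *ᵥ u = d + (a : ℂ) • g) (w : Fin n → ℂ) :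
    (star (u - d) ⬝ᵥ (u - d)).re + a * quadValue G g u ≤
      (star (w - d) ⬝ᵥ (w - d)).re + a * quadValue G g w := by
  obtain ⟨e, rfl⟩ : ∃ e, w = u + e := ⟨w - u, by simp⟩
  have hud : u - d = (a : ℂ) • (g - G *ᵥ u) := by
    rw [add_mulVec, one_mulVec, smul_mulVec] at hu
    rw [smul_sub, sub_eq_sub_iff_add_eq_add, hu, add_comm]
  have hwd : u + e - d = (u - d) + e := by abel
  have norm_add : (star (u + e - d) ⬝ᵥ (u + e - d)).re = (star (u - d) ⬝ᵥ (u - d)).re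
      + 2 * (star e ⬝ᵥ (u - d)).re + (star e ⬝ᵥ e).re := by
    have := re_star_dotProduct_comm (u - d) e
    rw [hwd, star_add]
    simp only [add_dotProduct, dotProduct_add, Complex.add_re]
    linarith
  have cross : (star e ⬝ᵥ (u - d)).re = a * ((star e ⬝ᵥ g).re - (star e ⬝ᵥ (G *ᵥ u)).re) := by
    rw [hud, dotProduct_smul, dotProduct_sub, smul_eq_mul, Complex.re_ofReal_mul, Complex.sub_re]
  have quad_add : quadValue G g (u + e) = quadValue G g u
      + 2 * ((star e ⬝ᵥ (G *ᵥ u)).re - (star e ⬝ᵥ g).re) + (star e ⬝ᵥ (G *ᵥ e)).re := by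
    have h₁ := hG.isHermitian.re_star_dotProduct_mulVec_comm u e
    have h₂ := re_star_dotProduct_comm g e
    simp only [quadValue, star_add, mulVec_add, add_dotProduct, dotProduct_add, Complex.add_re]
    linarith
  have he := re_star_dotProduct_self_nonneg e
  have hGe : 0 ≤ a * (star e ⬝ᵥ (G *ᵥ e)).re := mul_nonneg ha (hG.re_dotProduct_nonneg e)
  rw [norm_add, cross, quad_add]
  linarith

lemma Matrix.PosSemidef.one_add_smul_mulVec_inv {n : ℕ} {G : Matrix (Fin n) (Fin n) ℂ}
    (hG : G.PosSemidef) {a : ℝ} (ha : 0 ≤ a) (v : Fin n → ℂ) :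
    (1 + (a : ℂ) • G) *ᵥ ((1 + (a : ℂ) • G)⁻¹ *ᵥ v) = v := by
  have hpos : (1 + (a : ℂ) • G).PosDef :=
    PosDef.one.add_posSemidef (hG.smul (Complex.zero_le_real.mpr ha))
  rw [mulVec_mulVec, mul_nonsing_inv _ ((isUnit_iff_isUnit_det _).mp hpos.isUnit), one_mulVec]

/-- Monotonicity of the constraint value along the Lagrange-multiplier path
(Appendix E of the paper): with `G` Hermitian PSD,
`h(ε) = q((I + εG)⁻¹(d + εg))` is non-increasing on `[0, ∞)`, where
`q(u) = uᴴ G u − 2 Re(gᴴ u)`. -/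
theorem multiplier_path_antitone {n : ℕ}
    (G : Matrix (Fin n) (Fin n) ℂ) (hG : G.PosSemidef)
    (d g : Fin n → ℂ)
    (q : (Fin n → ℂ) → ℝ)
    (hq : ∀ u, q u = (star u ⬝ᵥ (G *ᵥ u)).re - 2 * (star g ⬝ᵥ u).re)
    (h : ℝ → ℝ)
    (hh : ∀ ε : ℝ, h ε = q ((1 + (ε : ℂ) • G)⁻¹ *ᵥ (d + (ε : ℂ) • g))) :
    ∀ ε₁ ε₂ : ℝ, 0 ≤ ε₁ → ε₁ ≤ ε₂ → h ε₂ ≤ h ε₁ := by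
  intro ε₁ ε₂ h₁ h₁₂
  obtain rfl | hlt := h₁₂.eq_or_lt
  · exact le_rfl
  have h₂ : 0 ≤ ε₂ := h₁.trans h₁₂
  have hqv : q = quadValue G g := funext hq
  rw [hh, hh, hqv]
  set u₁ := (1 + (ε₁ : ℂ) • G)⁻¹ *ᵥ (d + (ε₁ : ℂ) • g)
  set u₂ := (1 + (ε₂ : ℂ) • G)⁻¹ *ᵥ (d + (ε₂ : ℂ) • g)
  have le₁ := hG.lagrangian_le h₁ (hG.one_add_smul_mulVec_inv h₁ (d + (ε₁ : ℂ) • g)) u₂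
  have le₂ := hG.lagrangian_le h₂ (hG.one_add_smul_mulVec_inv h₂ (d + (ε₂ : ℂ) • g)) u₁
  refine le_of_mul_le_mul_left ?_ (sub_pos.mpr hlt)
  linarith
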